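/- arXiv:1111.5864 — 4 statements merged into one kernel-verified Lean document; each statement's English description precedes it below -/
import Mathlib

section
/- Let Kₙ be the complete graph of order n ≥ 3 and let f₀ : V(G₁) → V(G₂) be a constant function between two disjoint copies G₁, G₂ of Kₙ. Then dim(C(Kₙ, f₀)) = 2n − 3. -/
/-- The functigraph `C(G, f)`: two disjoint copies of `G` (as `Sum.inl`/`Sum.inr`),
with an edge from each `Sum.inl u` to `Sum.inr (f u)`. -/
def functigraph {V : Type*} (G : SimpleGraph V) (f : V → V) : SimpleGraph (V ⊕ V) :=
  SimpleGraph.fromRel (fun x y =>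
    match x, y with
    | Sum.inl a, Sum.inl b => G.Adj a b
    | Sum.inr a, Sum.inr b => G.Adj a b
    | Sum.inl a, Sum.inr b => f a = b
    | Sum.inr _, Sum.inl _ => False)

/-- `S` is a resolving set of `H`: every pair of distinct vertices is resolved by some `w ∈ S`. -/
def IsResolving {V : Type*} (H : SimpleGraph V) (S : Set V) : Prop :=
  ∀ x y : V, x ≠ y → ∃ w ∈ S, H.dist x w ≠ H.dist y w

/-- The metric dimension of `H`: minimum cardinality of a (finite) resolving set. -/
noncomputable def metricDim {V : Type*} (H : SimpleGraph V) : ℕ :=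
  sInf {k | ∃ S : Set V, IsResolving H S ∧ S.Finite ∧ S.ncard = k}

/-- The cycle graph on `ZMod n` (for `n ≥ 3`): `i` is adjacent to `i ± 1`. -/
def cycGraph (n : ℕ) : SimpleGraph (ZMod n) :=
  SimpleGraph.fromRel (fun i j => j = i + 1)

/-- The closed neighborhood `N[S]` of a set `S` in `H`. -/
def closedNbhd {V : Type*} (H : SimpleGraph V) (S : Set V) : Set V :=
  S ∪ {x | ∃ s ∈ S, H.Adj x s}

theorem fg_ll {n : ℕ} (c a b : Fin n) :
    (functigraph (⊤ : SimpleGraph (Fin n)) (fun _ => c)).dist (Sum.inl a) (Sum.inl b)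
      = if a = b then 0 else 1 := by
  split_ifs with h
  · simp [h]
  · rw [SimpleGraph.dist_eq_one_iff_adj]
    simp [functigraph, SimpleGraph.fromRel_adj, h]

theorem fg_rr {n : ℕ} (c a b : Fin n) :
    (functigraph (⊤ : SimpleGraph (Fin n)) (fun _ => c)).dist (Sum.inr a) (Sum.inr b)
      = if a = b then 0 else 1 := by
  split_ifs with h
  · simp [h]
  · rw [SimpleGraph.dist_eq_one_iff_adj]
    simp [functigraph, SimpleGraph.fromRel_adj, h]

theorem fg_lr {n : ℕ} (c a b : Fin n) :
    (functigraph (⊤ : SimpleGraph (Fin n)) (fun _ => c)).dist (Sum.inl a) (Sum.inr b)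
      = if b = c then 1 else 2 := by
  have h1 : (functigraph (⊤ : SimpleGraph (Fin n)) (fun _ => c)).Adj (Sum.inl a) (Sum.inr c) := by
    simp [functigraph, SimpleGraph.fromRel_adj]
  split_ifs with h
  · subst h
    rwa [SimpleGraph.dist_eq_one_iff_adj]
  · have h2 : (functigraph (⊤ : SimpleGraph (Fin n)) (fun _ => c)).Adj (Sum.inr c) (Sum.inr b) := by
      simp [functigraph, SimpleGraph.fromRel_adj, Ne.symm h]
    have hle := SimpleGraph.dist_le (SimpleGraph.Walk.cons h1 (SimpleGraph.Walk.cons h2 .nil))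
    have hr : (functigraph (⊤ : SimpleGraph (Fin n)) (fun _ => c)).Reachable
      (Sum.inl a) (Sum.inr b) := h1.reachable.trans h2.reachable
    have h0 := hr.pos_dist_of_ne (by simp)
    have hone : ¬ (functigraph (⊤ : SimpleGraph (Fin n)) (fun _ => c)).dist
        (Sum.inl a) (Sum.inr b) = 1 := by
      rw [SimpleGraph.dist_eq_one_iff_adj]
      simp [functigraph, SimpleGraph.fromRel_adj, Ne.symm h]
    simp only [SimpleGraph.Walk.length_cons, SimpleGraph.Walk.length_nil] at hle
    omega

theorem fg_rl {n : ℕ} (c a b : Fin n) :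
    (functigraph (⊤ : SimpleGraph (Fin n)) (fun _ => c)).dist (Sum.inr a) (Sum.inl b)
      = if a = c then 1 else 2 := by
  rw [SimpleGraph.dist_comm, fg_lr]

theorem stmt5 (n : ℕ) (hn : 3 <= n) (f₀ : Fin n -> Fin n) (c : Fin n)
    (hf : ∀ u, f₀ u = c) :
    metricDim (functigraph (⊤ : SimpleGraph (Fin n)) f₀) = 2 * n - 3 := by
  obtain rfl : f₀ = fun _ => c := funext hf
  have ex : ∀ a b : Fin n, ∃ d, d ≠ a ∧ d ≠ b := by
    intro a b
    have : ∃ d, d ∉ ({a, b} : Finset (Fin n)) := by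
      by_contra! hh
      have h1 := Finset.card_le_card (fun x _ => hh x : (Finset.univ : Finset (Fin n)) ⊆ {a, b})
      have h2 := Finset.card_le_two (a := a) (b := b)
      simp at h1
      omega
    simpa using this
  have hcard : ∀ S : Set (Fin n ⊕ Fin n), S.ncard + Sᶜ.ncard = 2 * n := by
    intro S
    rw [Set.ncard_add_ncard_compl]
    simp
    omega
  apply le_antisymm
  · apply Nat.sInf_le
    obtain ⟨b, hb, -⟩ := ex c c
    obtain ⟨d, hdc, hdb⟩ := ex c b
    refine ⟨({Sum.inl c, Sum.inr c, Sum.inr b} : Set (Fin n ⊕ Fin n))ᶜ, ?_, Set.toFinite _, ?_⟩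
    · intro x y hxy
      by_cases hx : x ∈ ({Sum.inl c, Sum.inr c, Sum.inr b} : Set (Fin n ⊕ Fin n))ᶜ
      · refine ⟨x, hx, ?_⟩
        rcases x with x | x <;> rcases y with y | y <;>
          simp only [fg_ll, fg_rr, fg_lr, fg_rl] <;> grind
      by_cases hy : y ∈ ({Sum.inl c, Sum.inr c, Sum.inr b} : Set (Fin n ⊕ Fin n))ᶜ
      · refine ⟨y, hy, ?_⟩
        rcases x with x | x <;> rcases y with y | y <;>
          simp only [fg_ll, fg_rr, fg_lr, fg_rl] <;> grind
      have e1 : (Sum.inr d : Fin n ⊕ Fin n) ∈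
        ({Sum.inl c, Sum.inr c, Sum.inr b} : Set (Fin n ⊕ Fin n))ᶜ := by simp [hdc, hdb]
      have e2 : (Sum.inl d : Fin n ⊕ Fin n) ∈
        ({Sum.inl c, Sum.inr c, Sum.inr b} : Set (Fin n ⊕ Fin n))ᶜ := by simp [hdc]
      simp only [Set.mem_compl_iff, not_not, Set.mem_insert_iff, Set.mem_singleton_iff] at hx hy
      by_contra! hh
      have r1 := hh _ e1
      have r2 := hh _ e2
      rcases hx with rfl | rfl | rfl <;> rcases hy with rfl | rfl | rfl <;>
        simp only [fg_ll, fg_rr, fg_lr, fg_rl] at r1 r2 <;> grind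
    · have := hcard {Sum.inl c, Sum.inr c, Sum.inr b}
      have h3 : ({Sum.inl c, Sum.inr c, Sum.inr b} : Set (Fin n ⊕ Fin n)).ncard = 3 := by
        rw [Set.ncard_eq_three]
        exact ⟨_, _, _, by simp, by simp, by simpa using hb.symm, rfl⟩
      omega
  · apply le_csInf
    · exact ⟨_, Set.univ, fun x y hxy => ⟨x, trivial, by
        rcases x with x | x <;> rcases y with y | y <;>
          simp only [fg_ll, fg_rr, fg_lr, fg_rl] <;> grind⟩, Set.toFinite _, rfl⟩
    · rintro k ⟨S, hS, -, rfl⟩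
      have hl : ∃ a, ∀ u, Sum.inl u ∉ S → u = a := by
        by_contra! hh
        obtain ⟨u, hu, -⟩ := hh c
        obtain ⟨v, hv, huv⟩ := hh u
        obtain ⟨w, hw, hd⟩ := hS (Sum.inl u) (Sum.inl v) (by simpa using huv.symm)
        rcases w with w | w <;> simp only [fg_ll, fg_rr, fg_lr, fg_rl] at hd <;> grind
      have hr : ∃ a, ∀ u, Sum.inr u ∉ S → u ≠ c → u = a := by
        by_contra! hh
        obtain ⟨u, hu, huc, -⟩ := hh c
        obtain ⟨v, hv, hvc, huv⟩ := hh u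
        obtain ⟨w, hw, hd⟩ := hS (Sum.inr u) (Sum.inr v) (by simpa using huv.symm)
        rcases w with w | w <;> simp only [fg_ll, fg_rr, fg_lr, fg_rl] at hd <;> grind
      obtain ⟨a, ha⟩ := hl
      obtain ⟨b, hb⟩ := hr
      have hsub : Sᶜ ⊆ {Sum.inl a, Sum.inr c, Sum.inr b} := by
        rintro (x | x) hx
        · simp [ha x hx]
        · by_cases hxc : x = c
          · simp [hxc]
          · simp [hb x hx hxc]
      have h1 := Set.ncard_le_ncard hsub (Set.toFinite _)
      have h2 : ({Sum.inl a, Sum.inr c, Sum.inr b} : Set (Fin n ⊕ Fin n)).ncard ≤ 3 := by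
        refine (Set.ncard_insert_le _ _).trans ?_
        have := Set.ncard_insert_le (Sum.inr c : Fin n ⊕ Fin n) {Sum.inr b}
        rw [Set.ncard_singleton] at this
        omega
      have := hcard S
      omega
end

section
/- Let Kₙ be the complete graph of order n ≥ 3 and let f : V(G₁) → V(G₂) be a function between two disjoint copies G₁, G₂ of Kₙ whose image has size s = |f(V(G₁))| with 1 < s < n. Then dim(C(Kₙ, f)) = 2n − 2 − s. -/
section helpers

variable {n : ℕ} (f : Fin n → Fin n)

theorem fg_ll_s7 (a b : Fin n) : (functigraph (⊤ : SimpleGraph (Fin n)) f).Adj (Sum.inl a) (Sum.inl b) ↔ a ≠ b := by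
  simp [functigraph, SimpleGraph.fromRel_adj]; tauto

theorem fg_rr_s7 (a b : Fin n) : (functigraph (⊤ : SimpleGraph (Fin n)) f).Adj (Sum.inr a) (Sum.inr b) ↔ a ≠ b := by
  simp [functigraph, SimpleGraph.fromRel_adj]; tauto

theorem fg_lr_s7 (a b : Fin n) : (functigraph (⊤ : SimpleGraph (Fin n)) f).Adj (Sum.inl a) (Sum.inr b) ↔ f a = b := by
  simp [functigraph, SimpleGraph.fromRel_adj]

theorem fgd_ll (a b : Fin n) : (functigraph (⊤ : SimpleGraph (Fin n)) f).dist (Sum.inl a) (Sum.inl b) = if a = b then 0 else 1 := by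
  split_ifs with h
  · subst h; simp
  · rw [SimpleGraph.dist_eq_one_iff_adj, fg_ll_s7]; exact h

theorem fgd_rr (a b : Fin n) : (functigraph (⊤ : SimpleGraph (Fin n)) f).dist (Sum.inr a) (Sum.inr b) = if a = b then 0 else 1 := by
  split_ifs with h
  · subst h; simp
  · rw [SimpleGraph.dist_eq_one_iff_adj, fg_rr_s7]; exact h

theorem fgd_lr (a b : Fin n) : (functigraph (⊤ : SimpleGraph (Fin n)) f).dist (Sum.inl a) (Sum.inr b) = if f a = b then 1 else 2 := by
  split_ifs with h
  · rw [SimpleGraph.dist_eq_one_iff_adj, fg_lr_s7]; exact h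
  · have h1 := (fg_lr_s7 f a (f a)).2 rfl
    have h2 := (fg_rr_s7 f (f a) b).2 h
    let w := SimpleGraph.Walk.cons h1 (SimpleGraph.Walk.cons h2 SimpleGraph.Walk.nil)
    have hle := SimpleGraph.dist_le w
    have hw : w.length = 2 := rfl
    have h3 : (functigraph (⊤ : SimpleGraph (Fin n)) f).dist (Sum.inl a) (Sum.inr b) ≠ 1 := by
      rw [Ne, SimpleGraph.dist_eq_one_iff_adj, fg_lr_s7]; exact h
    have h4 := w.reachable.pos_dist_of_ne (by simp)
    omega

theorem fgd_rl (a b : Fin n) : (functigraph (⊤ : SimpleGraph (Fin n)) f).dist (Sum.inr b) (Sum.inl a) = if f a = b then 1 else 2 := by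
  rw [SimpleGraph.dist_comm, fgd_lr]

theorem fg_upper (s : ℕ) (hs : s = (Finset.univ.image f).card) (hs1 : 1 < s) (hs2 : s < n) :
    ∃ S : Set (Fin n ⊕ Fin n), IsResolving (functigraph (⊤ : SimpleGraph (Fin n)) f) S ∧ S.Finite ∧ S.ncard = 2 * n - 2 - s := by
  classical
  obtain ⟨b', hb'⟩ : ∃ b', b' ∉ Finset.univ.image f := by
    by_contra! h
    have := Finset.eq_univ_iff_forall.2 h
    rw [this] at hs; simp at hs; omega
  have hni : ¬ Function.Injective f := by
    intro h
    rw [Finset.card_image_of_injective _ h] at hs; simp at hs; omega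
  simp only [Function.Injective, not_forall] at hni
  obtain ⟨a0, a1, hf, hne⟩ := hni
  obtain ⟨c, hc, hc'⟩ := Finset.exists_mem_ne (hs ▸ hs1) (f a0)
  obtain ⟨a2, -, rfl⟩ := Finset.mem_image.1 hc
  have hb : ∀ x, f x ≠ b' := by simpa using hb'
  let T : Finset (Fin n ⊕ Fin n) := Finset.disjSum {a0} (insert b' (Finset.univ.image f))
  have hT : T.card = s + 2 := by
    simp only [T, Finset.card_disjSum, Finset.card_insert_of_notMem hb', Finset.card_singleton]; omega
  refine ⟨((Tᶜ : Finset _) : Set _), ?_, Finset.finite_toSet _, ?_⟩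
  swap
  · rw [Set.ncard_coe_finset, Finset.card_compl, hT]; simp; omega
  have memA : ∀ a, a ≠ a0 → Sum.inl a ∈ ((Tᶜ : Finset _) : Set (Fin n ⊕ Fin n)) := by
    intro a h; simp [T, h]
  have memB : ∀ b, b ≠ b' → (∀ x, f x ≠ b) → Sum.inr b ∈ ((Tᶜ : Finset _) : Set (Fin n ⊕ Fin n)) := by
    intro a h; simp [T, h]
  have fib : ∀ x, ∃ y, y ≠ a0 ∧ f y = f x := by
    intro x
    by_cases h : x = a0
    · exact ⟨a1, fun h => hne h.symm, by rw [h, hf]⟩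
    · exact ⟨x, h, rfl⟩
  have mix : ∀ a b, ∃ w ∈ ((Tᶜ : Finset _) : Set (Fin n ⊕ Fin n)), (functigraph (⊤ : SimpleGraph (Fin n)) f).dist (Sum.inl a) w ≠ (functigraph (⊤ : SimpleGraph (Fin n)) f).dist (Sum.inr b) w := by
    intro a b
    by_cases h : f a1 = b
    · refine ⟨Sum.inl a2, memA _ (by rintro rfl; exact hc' rfl), ?_⟩
      rw [fgd_ll, fgd_rl, if_neg (c := f a2 = b) (by rw [← h, ← hf]; exact hc')]
      split_ifs <;> simp
    · refine ⟨Sum.inl a1, memA _ (fun h => hne h.symm), ?_⟩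
      rw [fgd_ll, fgd_rl, if_neg h]
      split_ifs <;> simp
  have key : ∀ b c, b ≠ c → b ≠ b' → ∃ w ∈ ((Tᶜ : Finset _) : Set (Fin n ⊕ Fin n)), (functigraph (⊤ : SimpleGraph (Fin n)) f).dist (Sum.inr b) w ≠ (functigraph (⊤ : SimpleGraph (Fin n)) f).dist (Sum.inr c) w := by
    intro b c hbc hb1
    by_cases h : ∃ x, f x = b
    · obtain ⟨x, rfl⟩ := h
      obtain ⟨y, hy, hyx⟩ := fib x
      refine ⟨Sum.inl y, memA _ hy, ?_⟩
      rw [fgd_rl, fgd_rl, if_pos hyx, if_neg (by rw [hyx]; exact hbc)]; simp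
    · push Not at h
      refine ⟨Sum.inr b, memB _ hb1 h, ?_⟩
      rw [fgd_rr, fgd_rr, if_pos rfl, if_neg hbc.symm]; simp
  rintro (x | x) (y | y) hxy
  · have hxy' : x ≠ y := fun h => hxy (by rw [h])
    by_cases h : x = a0
    · refine ⟨Sum.inl y, memA _ (by rw [← h]; exact hxy'.symm), ?_⟩
      rw [fgd_ll, fgd_ll, if_neg hxy', if_pos rfl]; simp
    · refine ⟨Sum.inl x, memA _ h, ?_⟩
      rw [fgd_ll, fgd_ll, if_neg hxy'.symm, if_pos rfl]; simp
  · exact mix x y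
  · obtain ⟨w, hw, h⟩ := mix y x
    exact ⟨w, hw, h.symm⟩
  · have hxy' : x ≠ y := fun h => hxy (by rw [h])
    by_cases h : x = b'
    · obtain ⟨w, hw, h⟩ := key y x hxy'.symm (by rw [← h]; exact hxy'.symm)
      exact ⟨w, hw, h.symm⟩
    · exact key x y hxy' h

theorem fg_lower (s : ℕ) (hs : s = (Finset.univ.image f).card)
    (S : Finset (Fin n ⊕ Fin n)) (hS : IsResolving (functigraph (⊤ : SimpleGraph (Fin n)) f) (S : Set _)) :
    2 * n - 2 - s ≤ S.card := by
  classical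
  let TA : Finset (Fin n) := Finset.univ.filter fun a => Sum.inl a ∉ S
  let TB : Finset (Fin n) := Finset.univ.filter fun a => Sum.inr a ∉ S
  have hcompl : Sᶜ = TA.disjSum TB := by
    ext (x | x) <;> simp [TA, TB]
  have hc : Sᶜ.card = TA.card + TB.card := by rw [hcompl, Finset.card_disjSum]
  rw [Finset.card_compl] at hc
  simp only [Fintype.card_sum, Fintype.card_fin] at hc
  -- two missing left vertices: some image is in S, images distinct
  have hA : ∀ x ∈ TA, ∀ y ∈ TA, x ≠ y → f x ≠ f y ∧ (f x ∉ TB ∨ f y ∉ TB) := by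
    intro x hx y hy hxy
    simp only [TA, Finset.mem_filter, Finset.mem_univ, true_and] at hx hy
    obtain ⟨w | w, hw, h⟩ := hS (Sum.inl x) (Sum.inl y) (by simpa using hxy)
    · rw [fgd_ll, fgd_ll, if_neg (by rintro rfl; exact hx hw), if_neg (by rintro rfl; exact hy hw)] at h
      simp at h
    · rw [fgd_lr, fgd_lr] at h
      have hw : Sum.inr w ∈ S := hw
      simp only [TB, Finset.mem_filter, Finset.mem_univ, true_and, not_not]
      by_cases h1 : f x = w <;> by_cases h2 : f y = w <;> simp_all
      intro e; exact h2 e.symm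
  have hB : (TB \ Finset.univ.image f).card ≤ 1 := by
    rw [Finset.card_le_one]
    intro x hx y hy
    simp only [TB, Finset.mem_sdiff, Finset.mem_filter, Finset.mem_univ, true_and, Finset.mem_image, not_exists] at hx hy
    by_contra hxy
    obtain ⟨w | w, hw, h⟩ := hS (Sum.inr x) (Sum.inr y) (by simpa using hxy)
    · rw [fgd_rl, fgd_rl, if_neg (hx.2 w), if_neg (hy.2 w)] at h
      simp at h
    · rw [fgd_rr, fgd_rr, if_neg (by rintro rfl; exact hx.1 hw), if_neg (by rintro rfl; exact hy.1 hw)] at h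
      simp at h
  have hP : (TA.image f).card = TA.card := by
    apply Finset.card_image_of_injOn
    intro x hx y hy hxy
    by_contra h
    exact (hA x hx y hy h).1 hxy
  have hPQ : (TA.image f ∩ (TB ∩ Finset.univ.image f)).card ≤ 1 := by
    rw [Finset.card_le_one]
    intro u hu v hv
    simp only [Finset.mem_inter] at hu hv
    obtain ⟨x, hx, rfl⟩ := Finset.mem_image.1 hu.1
    obtain ⟨y, hy, rfl⟩ := Finset.mem_image.1 hv.1
    by_contra h
    rcases (hA x hx y hy (fun e => h (by rw [e]))).2 with h' | h'
    · exact h' hu.2.1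
    · exact h' hv.2.1
  have hU : (TA.image f ∪ (TB ∩ Finset.univ.image f)).card ≤ s := by
    rw [hs]
    apply Finset.card_le_card
    apply Finset.union_subset
    · exact Finset.image_subset_image (Finset.subset_univ _)
    · exact Finset.inter_subset_right
  have h1 := Finset.card_union_add_card_inter (TA.image f) (TB ∩ Finset.univ.image f)
  have h2 := Finset.card_sdiff_add_card_inter TB (Finset.univ.image f)
  omega

end helpers

theorem stmt7 (n : ℕ) (hn : 3 <= n) (f : Fin n -> Fin n) (s : ℕ)
    (hs : s = (Finset.univ.image f).card) (hs1 : 1 < s) (hs2 : s < n) :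
    metricDim (functigraph (⊤ : SimpleGraph (Fin n)) f) = 2 * n - 2 - s := by
  have hu := fg_upper f s hs hs1 hs2
  apply le_antisymm
  · exact Nat.sInf_le hu
  · unfold metricDim
    refine le_csInf (s := {k | ∃ S : Set (Fin n ⊕ Fin n), IsResolving (functigraph (⊤ : SimpleGraph (Fin n)) f) S ∧ S.Finite ∧ S.ncard = k}) ⟨_, hu⟩ ?_
    rintro k ⟨S, hS, hfin, rfl⟩
    obtain ⟨S, rfl⟩ := hfin.exists_finset_coe
    rw [Set.ncard_coe_finset]
    exact fg_lower f s hs S hS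
end

section
/- Let Cₙ be the cycle of order n ≥ 6 with two disjoint copies G₁ (vertices u₁,…,uₙ) and G₂ (vertices v₁,…,vₙ), and let f₀ : V(G₁) → V(G₂) be the constant function f₀(uᵢ) = v₁ for all i. Let S be a minimum resolving set of C(Cₙ, f₀). Then for each vertex uᵢ ∈ S ∩ V(G₁), letting A = N(uᵢ) ∩ V(G₁) be the set of the two cycle-neighbors of uᵢ in G₁, at least one vertex of (N[A] − {uᵢ}) ∩ V(G₁) belongs to S, where N[A] is the closed neighborhood of A in C(Cₙ, f₀). -/
lemma fg_ll_s12 {n : ℕ} (c d : ZMod n) :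
    (functigraph (cycGraph n) (fun _ => (0 : ZMod n))).Adj (Sum.inl c) (Sum.inl d) ↔
      c ≠ d ∧ (d = c + 1 ∨ c = d + 1) := by
  simp only [functigraph, cycGraph, SimpleGraph.fromRel_adj, ne_eq, Sum.inl.injEq]
  have : (d = c) ↔ (c = d) := eq_comm
  tauto

lemma fg_lr_s12 {n : ℕ} (c d : ZMod n) :
    (functigraph (cycGraph n) (fun _ => (0 : ZMod n))).Adj (Sum.inl c) (Sum.inr d) ↔ d = 0 := by
  simp [functigraph, eq_comm]

lemma fg_rl_s12 {n : ℕ} (c d : ZMod n) :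
    (functigraph (cycGraph n) (fun _ => (0 : ZMod n))).Adj (Sum.inr d) (Sum.inl c) ↔ d = 0 := by
  rw [SimpleGraph.adj_comm, fg_lr_s12]

lemma fg_rr_s12 {n : ℕ} (c d : ZMod n) :
    (functigraph (cycGraph n) (fun _ => (0 : ZMod n))).Adj (Sum.inr c) (Sum.inr d) ↔
      c ≠ d ∧ (d = c + 1 ∨ c = d + 1) := by
  simp only [functigraph, cycGraph, SimpleGraph.fromRel_adj, ne_eq, Sum.inr.injEq]
  have : (d = c) ↔ (c = d) := eq_comm
  tauto

def reflHom {n : ℕ} (a : ZMod n) :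
    (functigraph (cycGraph n) (fun _ => (0 : ZMod n))) →g
    (functigraph (cycGraph n) (fun _ => (0 : ZMod n))) where
  toFun := Sum.map (fun c => 2 * a - c) id
  map_rel' := by
    rintro (c | c) (d | d) h
    · simp only [Sum.map_inl, fg_ll_s12] at h ⊢
      obtain ⟨h1, h2⟩ := h
      refine ⟨fun e => h1 (by linear_combination -e), ?_⟩
      rcases h2 with h2 | h2
      · right; linear_combination h2
      · left; linear_combination h2
    · simpa only [Sum.map_inl, Sum.map_inr, id, fg_lr_s12] using h
    · simpa only [Sum.map_inl, Sum.map_inr, id, fg_rl_s12] using h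
    · simpa only [Sum.map_inr, id] using h

lemma fg_conn {n : ℕ} (c d : ZMod n) :
    ∃ p : (functigraph (cycGraph n) (fun _ => (0 : ZMod n))).Walk (Sum.inl c) (Sum.inl d),
      p.length = 2 :=
  ⟨.cons ((fg_lr_s12 c 0).2 rfl) (.cons ((fg_rl_s12 d 0).2 rfl) .nil), rfl⟩

lemma fg_dist_two {n : ℕ} (c d : ZMod n) (h1 : c ≠ d) (h2 : d ≠ c + 1) (h3 : c ≠ d + 1) :
    (functigraph (cycGraph n) (fun _ => (0 : ZMod n))).dist (Sum.inl c) (Sum.inl d) = 2 := by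
  obtain ⟨p, hp⟩ := fg_conn c d
  have hle := hp ▸ SimpleGraph.dist_le p
  have h0 := p.reachable.pos_dist_of_ne (by simpa using h1)
  have hne : (functigraph (cycGraph n) (fun _ => (0 : ZMod n))).dist
      (Sum.inl c) (Sum.inl d) ≠ 1 := by
    rw [Ne, SimpleGraph.dist_eq_one_iff_adj, fg_ll_s12]
    tauto
  omega

lemma fg_dist_le {n : ℕ} (a : ZMod n) (x y : ZMod n ⊕ ZMod n)
    (h : (functigraph (cycGraph n) (fun _ => (0 : ZMod n))).Reachable x y) :
    (functigraph (cycGraph n) (fun _ => (0 : ZMod n))).dist (reflHom a x) (reflHom a y) ≤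
    (functigraph (cycGraph n) (fun _ => (0 : ZMod n))).dist x y := by
  obtain ⟨p, hp⟩ := h.exists_walk_length_eq_dist
  rw [← hp, ← SimpleGraph.Walk.length_map (reflHom a) p]
  exact SimpleGraph.dist_le _

lemma refl_refl {n : ℕ} (a : ZMod n) (x : ZMod n ⊕ ZMod n) : reflHom a (reflHom a x) = x := by
  rcases x with c | c
  · change Sum.inl (2 * a - (2 * a - c)) = _
    congr 1; ring
  · rfl

lemma fg_dist_eq {n : ℕ} (a : ZMod n) (x y : ZMod n ⊕ ZMod n) :
    (functigraph (cycGraph n) (fun _ => (0 : ZMod n))).dist (reflHom a x) (reflHom a y) =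
    (functigraph (cycGraph n) (fun _ => (0 : ZMod n))).dist x y := by
  by_cases h : (functigraph (cycGraph n) (fun _ => (0 : ZMod n))).Reachable x y
  · apply le_antisymm (fg_dist_le a x y h)
    have := fg_dist_le a _ _ (h.map (reflHom a))
    rwa [refl_refl, refl_refl] at this
  · have h' : ¬ (functigraph (cycGraph n) (fun _ => (0 : ZMod n))).Reachable
        (reflHom a x) (reflHom a y) := by
      intro h'
      have := h'.map (reflHom a)
      rw [refl_refl, refl_refl] at this
      exact h this
    rw [SimpleGraph.dist_eq_zero_of_not_reachable h, SimpleGraph.dist_eq_zero_of_not_reachable h']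

theorem stmt12 (n : ℕ) (hn : 6 <= n) (S : Set (ZMod n ⊕ ZMod n))
    (hres : IsResolving (functigraph (cycGraph n) (fun _ => (0 : ZMod n))) S)
    (hfin : S.Finite)
    (hmin : S.ncard = metricDim (functigraph (cycGraph n) (fun _ => (0 : ZMod n))))
    (a : ZMod n) (ha : Sum.inl a ∈ S) :
    ∃ x ∈ (closedNbhd (functigraph (cycGraph n) (fun _ => (0 : ZMod n)))
        ((functigraph (cycGraph n) (fun _ => (0 : ZMod n))).neighborSet (Sum.inl a) ∩
          Set.range Sum.inl) \ {Sum.inl a}) ∩ Set.range Sum.inl,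
      x ∈ S := by
  have key : ∀ k : ℕ, 0 < k → k < 6 → ((k : ℕ) : ZMod n) ≠ 0 := by
    intro k h0 h1 h
    rw [ZMod.natCast_eq_zero_iff] at h
    have := Nat.le_of_dvd h0 h
    omega
  have k1 : (1 : ZMod n) ≠ 0 := by simpa using key 1 (by norm_num) (by norm_num)
  have k2 : (2 : ZMod n) ≠ 0 := by simpa using key 2 (by norm_num) (by norm_num)
  by_contra hcon
  push Not at hcon
  have m1 : ∀ c : ZMod n, c ≠ a → (c = a + 1 ∨ c = a - 1 ∨ c = a + 2 ∨ c = a - 2) →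
      Sum.inl c ∉ S := by
    intro c hca hc
    refine hcon _ ⟨⟨?_, by simpa using hca⟩, ⟨c, rfl⟩⟩
    have p1 : a ≠ a + 1 := fun e => k1 (by linear_combination -e)
    have p2 : a ≠ a - 1 := fun e => k1 (by linear_combination e)
    rcases hc with h | h | h | h
    · left
      exact ⟨(fg_ll_s12 _ _).2 ⟨hca.symm, Or.inl h⟩, c, rfl⟩
    · left
      exact ⟨(fg_ll_s12 _ _).2 ⟨hca.symm, Or.inr (by rw [h]; ring)⟩, c, rfl⟩
    · right
      refine ⟨Sum.inl (a + 1), ⟨(fg_ll_s12 _ _).2 ⟨p1, Or.inl rfl⟩, _, rfl⟩, (fg_ll_s12 _ _).2 ⟨?_, ?_⟩⟩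
      · rw [h]; exact fun e => k1 (by linear_combination e)
      · right; rw [h]; ring
    · right
      refine ⟨Sum.inl (a - 1), ⟨(fg_ll_s12 _ _).2 ⟨p2, Or.inr (by ring)⟩, _, rfl⟩,
        (fg_ll_s12 _ _).2 ⟨?_, ?_⟩⟩
      · rw [h]; exact fun e => k1 (by linear_combination -e)
      · left; rw [h]; ring
  obtain ⟨w, hw, hd⟩ := hres (Sum.inl (a + 1)) (Sum.inl (a - 1)) (by
    intro e
    exact k2 (by linear_combination Sum.inl.inj e))
  have r1 : reflHom a (Sum.inl (a + 1)) = Sum.inl (a - 1) := by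
    change Sum.inl (2 * a - (a + 1)) = _
    congr 1; ring
  apply hd
  rcases w with c | c
  · by_cases hca : c = a
    · subst hca
      have r2 : reflHom c (Sum.inl c) = Sum.inl c := by
        change Sum.inl (2 * c - c) = _
        congr 1; ring
      have := fg_dist_eq c (Sum.inl (c + 1)) (Sum.inl c)
      rw [r1, r2] at this
      exact this.symm
    · have hn1 : c ≠ a + 1 := fun e => m1 c hca (by tauto) hw
      have hn2 : c ≠ a - 1 := fun e => m1 c hca (by tauto) hw
      have hn3 : c ≠ a + 2 := fun e => m1 c hca (by tauto) hw
      have hn4 : c ≠ a - 2 := fun e => m1 c hca (by tauto) hw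
      rw [fg_dist_two _ _ hn1.symm, fg_dist_two _ _ hn2.symm]
      · exact fun e => hca (by linear_combination e)
      · exact fun e => hn4 (by linear_combination -e)
      · exact fun e => hn3 (by linear_combination e)
      · exact fun e => hca (by linear_combination -e)
  · have := fg_dist_eq a (Sum.inl (a + 1)) (Sum.inr c)
    rw [r1] at this
    exact this.symm
end

section
/- Let Cₙ be the cycle of odd order n ≥ 5, and let f₀ : V(G₁) → V(G₂) be a constant function between two disjoint copies G₁, G₂ of Cₙ. Then dim(C(Cₙ, f₀)) = ⌈(2n + 3)/5⌉. -/
theorem dist_eq_of_pot {V : Type*} (H : SimpleGraph V) (w : V) (φ : V → ℕ)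
    (h0 : φ w = 0) (hl : ∀ x y, H.Adj x y → φ x ≤ φ y + 1)
    (hd : ∀ x, x ≠ w → ∃ y, H.Adj x y ∧ φ y + 1 = φ x) (x : V) : H.dist x w = φ x := by
  have h1 : ∀ k x, φ x = k → ∃ p : H.Walk x w, p.length = k := by
    intro k
    induction k with
    | zero =>
      intro x hx
      by_cases h : x = w
      · subst h; exact ⟨SimpleGraph.Walk.nil, rfl⟩
      · obtain ⟨y, _, h2⟩ := hd x h
        omega
    | succ k ih =>
      intro x hx
      have h : x ≠ w := by rintro rfl; omega
      obtain ⟨y, h1, h2⟩ := hd x h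
      obtain ⟨p, hp⟩ := ih y (by omega)
      exact ⟨SimpleGraph.Walk.cons h1 p, by simp [hp]⟩
  have h2 : ∀ x y (p : H.Walk x y), φ x ≤ φ y + p.length := by
    intro x y p
    induction p with
    | nil => simp
    | cons h p ih => have := hl _ _ h; simp only [SimpleGraph.Walk.length_cons]; omega
  obtain ⟨p, hp⟩ := h1 _ x rfl
  apply le_antisymm
  · rw [← hp]; exact SimpleGraph.dist_le p
  · obtain ⟨q, hq⟩ := (SimpleGraph.Walk.reachable p).exists_walk_length_eq_dist
    have := h2 _ _ q
    omega

def rho {n : ℕ} (x : ZMod n) : ℕ := min x.val (n - x.val)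

theorem val_succ' {n : ℕ} (hn : 5 ≤ n) (x : ZMod n) :
    (x + 1).val = if x.val + 1 = n then 0 else x.val + 1 := by
  have : NeZero n := ⟨by omega⟩
  have : Fact (1 < n) := ⟨by omega⟩
  have := ZMod.val_lt x
  rw [ZMod.val_add, ZMod.val_one]
  split_ifs with h
  · rw [h, Nat.mod_self]
  · exact Nat.mod_eq_of_lt (by omega)

theorem val_pred' {n : ℕ} (hn : 5 ≤ n) (x : ZMod n) :
    (x - 1).val = if x.val = 0 then n - 1 else x.val - 1 := by
  have : NeZero n := ⟨by omega⟩
  have h := val_succ' hn (x - 1)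
  rw [sub_add_cancel] at h
  have := ZMod.val_lt (x - 1)
  split_ifs at * <;> omega

theorem val_eq_zero' {n : ℕ} (hn : 5 ≤ n) (x : ZMod n) : x.val = 0 ↔ x = 0 := by
  have : NeZero n := ⟨by omega⟩
  exact ZMod.val_eq_zero x

theorem rho_zero {n : ℕ} : rho (0 : ZMod n) = 0 := by simp [rho]

theorem rho_one {n : ℕ} (hn : 5 ≤ n) : rho (1 : ZMod n) = 1 := by
  have h := val_succ' hn 0
  rw [zero_add, ZMod.val_zero] at h
  unfold rho
  split_ifs at h <;> omega

theorem rho_neg_one {n : ℕ} (hn : 5 ≤ n) : rho (-1 : ZMod n) = 1 := by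
  have h := val_pred' hn 0
  rw [zero_sub, ZMod.val_zero] at h
  unfold rho
  simp at h
  omega

theorem rho_succ {n : ℕ} (hn : 5 ≤ n) (x : ZMod n) :
    rho (x + 1) ≤ rho x + 1 ∧ rho x ≤ rho (x + 1) + 1 := by
  have : NeZero n := ⟨by omega⟩
  have h := val_succ' hn x
  have := ZMod.val_lt x
  unfold rho
  split_ifs at h <;> omega

theorem rho_desc {n : ℕ} (hn : 5 ≤ n) (x : ZMod n) (hx : x ≠ 0) :
    rho (x + 1) + 1 = rho x ∨ rho (x - 1) + 1 = rho x := by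
  have : NeZero n := ⟨by omega⟩
  have h := val_succ' hn x
  have h' := val_pred' hn x
  have := ZMod.val_lt x
  have h0 := (val_eq_zero' hn x).not.2 hx
  unfold rho
  split_ifs at h h' <;> omega

def D1 {n : ℕ} (a b : ZMod n) : ℕ :=
  if a = b then 0 else if b = a + 1 ∨ b = a - 1 then 1 else 2

def DD {n : ℕ} (c : ZMod n) : ZMod n ⊕ ZMod n → ZMod n ⊕ ZMod n → ℕ
  | Sum.inl a, Sum.inl b => D1 a b
  | Sum.inl _, Sum.inr b => 1 + rho (c - b)
  | Sum.inr a, Sum.inl _ => 1 + rho (a - c)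
  | Sum.inr a, Sum.inr b => rho (a - b)

theorem one_ne {n : ℕ} (hn : 5 ≤ n) : (1 : ZMod n) ≠ 0 := by
  have : Fact (1 < n) := ⟨by omega⟩
  exact one_ne_zero

theorem cyc_adj {n : ℕ} (hn : 5 ≤ n) (a b : ZMod n) :
    (cycGraph n).Adj a b ↔ b = a + 1 ∨ b = a - 1 := by
  have h1 := one_ne hn
  unfold cycGraph
  rw [SimpleGraph.fromRel_adj]
  constructor
  · rintro ⟨_, h | h⟩
    · exact Or.inl h
    · right; rw [h]; ring
  · rintro (h | h)
    · subst h; exact ⟨by simpa using h1, Or.inl rfl⟩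
    · subst h
      refine ⟨fun h => h1 ?_, Or.inr (by ring)⟩
      have : a - (a - 1) = 0 := by rw [← h]; ring
      simpa using this

theorem dist_eq {n : ℕ} (hn : 5 ≤ n) (f₀ : ZMod n → ZMod n)
    (c : ZMod n) (hf : ∀ u, f₀ u = c) (x w : ZMod n ⊕ ZMod n) :
    (functigraph (cycGraph n) f₀).dist x w = DD c x w := by
  have a1 : ∀ a b, (functigraph (cycGraph n) f₀).Adj (Sum.inl a) (Sum.inl b) ↔
      (b = a + 1 ∨ b = a - 1) := by
    intro a b
    rw [← cyc_adj hn]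
    simp only [functigraph, SimpleGraph.fromRel_adj]
    exact ⟨fun h => h.2.elim id (fun h => h.symm), fun h => ⟨by simpa using h.ne, Or.inl h⟩⟩
  have a2 : ∀ a b, (functigraph (cycGraph n) f₀).Adj (Sum.inr a) (Sum.inr b) ↔
      (b = a + 1 ∨ b = a - 1) := by
    intro a b
    rw [← cyc_adj hn]
    simp only [functigraph, SimpleGraph.fromRel_adj]
    exact ⟨fun h => h.2.elim id (fun h => h.symm), fun h => ⟨by simpa using h.ne, Or.inl h⟩⟩
  have a3 : ∀ a b, (functigraph (cycGraph n) f₀).Adj (Sum.inl a) (Sum.inr b) ↔ b = c := by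
    intro a b
    simp [functigraph, SimpleGraph.fromRel_adj, hf, eq_comm]
  have a4 : ∀ a b, (functigraph (cycGraph n) f₀).Adj (Sum.inr b) (Sum.inl a) ↔ b = c := by
    intro a b
    rw [SimpleGraph.adj_comm, a3]
  have rs : ∀ a b y : ZMod n, (b = a + 1 ∨ b = a - 1) → rho (a - y) ≤ rho (b - y) + 1 := by
    rintro a b y (rfl | rfl)
    · have := (rho_succ hn (a - y)).2
      rwa [show a - y + 1 = a + 1 - y by ring] at this
    · have := (rho_succ hn (a - 1 - y)).1
      rwa [show a - 1 - y + 1 = a - y by ring] at this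
  have rd : ∀ a y : ZMod n, a ≠ y →
      ∃ b, (b = a + 1 ∨ b = a - 1) ∧ rho (b - y) + 1 = rho (a - y) := by
    intro a y h
    rcases rho_desc hn (a - y) (sub_ne_zero.2 h) with h | h
    · exact ⟨a + 1, Or.inl rfl, by rw [← h]; congr 2; ring⟩
    · exact ⟨a - 1, Or.inr rfl, by rw [← h]; congr 2; ring⟩
  apply dist_eq_of_pot _ w (fun x => DD c x w)
  · rcases w with w | w
    · simp [DD, D1]
    · simp [DD, rho_zero]
  · rintro (x | x) (y | y) h <;> rcases w with w | w <;>
      simp only [a1, a2, a3, a4] at h <;> simp only [DD]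
    · unfold D1
      split_ifs with h1 h2 h3 h4 <;> try omega
      exact absurd (by subst y; exact h) h4
    · omega
    · unfold D1
      split_ifs <;> omega
    · subst h; omega
    · subst h; rw [sub_self, rho_zero]; omega
    · subst h; omega
    · have := rs _ _ c h; omega
    · exact rs _ _ w h
  · rintro (x | x) hx <;> rcases w with w | w
    · have hx' : x ≠ w := by simpa using hx
      by_cases h : w = x + 1 ∨ w = x - 1
      · exact ⟨Sum.inl w, (a1 _ _).2 h, by simp [DD, D1, hx', h]⟩
      · refine ⟨Sum.inr c, (a3 _ _).2 rfl, by simp [DD, D1, hx', h, rho_zero]⟩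
    · exact ⟨Sum.inr c, (a3 _ _).2 rfl, by simp [DD, add_comm]⟩
    · by_cases h : x = c
      · exact ⟨Sum.inl w, (a4 _ _).2 h, by simp [DD, D1, h, rho_zero]⟩
      · obtain ⟨b, h1, h2⟩ := rd x c h
        exact ⟨Sum.inr b, (a2 _ _).2 h1, by simp only [DD]; omega⟩
    · have hx' : x ≠ w := by simpa using hx
      obtain ⟨b, h1, h2⟩ := rd x w hx'
      exact ⟨Sum.inr b, (a2 _ _).2 h1, by simp only [DD]; omega⟩

theorem lower_count {n : ℕ} [NeZero n] (hn : 5 ≤ n) (T : Finset (ZMod n))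
    (hT : ∀ a b : ZMod n, a ≠ b → ∃ s ∈ T, D1 a s ≠ D1 b s) : 2 * n ≤ 2 + 5 * T.card := by
  classical
  set X0 : Finset (ZMod n) := Finset.univ.filter (fun v => v ∉ T ∧ v + 1 ∉ T ∧ v - 1 ∉ T) with hX0
  set X1 : Finset (ZMod n) := Finset.univ.filter
    (fun v => v ∉ T ∧ ((v + 1 ∈ T ∧ v - 1 ∉ T) ∨ (v + 1 ∉ T ∧ v - 1 ∈ T))) with hX1
  have c0 : X0.card ≤ 1 := by
    rw [Finset.card_le_one]
    intro a ha b hb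
    simp only [hX0, Finset.mem_filter, Finset.mem_univ, true_and] at ha hb
    by_contra hab
    obtain ⟨s, hs, h⟩ := hT a b hab
    apply h
    have key : ∀ v : ZMod n, (v ∉ T ∧ v + 1 ∉ T ∧ v - 1 ∉ T) → D1 v s = 2 := by
      rintro v ⟨h1, h2, h3⟩
      unfold D1
      rw [if_neg (by rintro rfl; exact h1 hs), if_neg]
      rintro (rfl | rfl)
      · exact h2 hs
      · exact h3 hs
    rw [key a ha, key b hb]
  have c1 : X1.card ≤ T.card := by
    apply Finset.card_le_card_of_injOn (fun v => if v + 1 ∈ T then v + 1 else v - 1)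
    · intro v hv
      simp only [hX1, Finset.coe_filter, Finset.mem_univ, true_and, Set.mem_ofPred_eq] at hv
      simp only [Finset.mem_coe]
      split_ifs with h
      · exact h
      · tauto
    · intro a ha b hb hab
      simp only [hX1, Finset.coe_filter, Finset.mem_univ, true_and, Set.mem_ofPred_eq] at ha hb
      by_contra hne
      obtain ⟨s, hs, h⟩ := hT a b hne
      apply h
      have key : ∀ v : ZMod n,
          (v ∉ T ∧ ((v + 1 ∈ T ∧ v - 1 ∉ T) ∨ (v + 1 ∉ T ∧ v - 1 ∈ T))) →
          D1 v s = if s = (if v + 1 ∈ T then v + 1 else v - 1) then 1 else 2 := by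
        rintro v ⟨h1, h2⟩
        unfold D1
        rw [if_neg (by rintro rfl; exact h1 hs)]
        congr 1
        apply propext
        split_ifs with h3
        · refine ⟨?_, Or.inl⟩
          rintro (h | rfl)
          · exact h
          · tauto
        · refine ⟨?_, Or.inr⟩
          rintro (rfl | h)
          · tauto
          · exact h
      rw [key a ha, key b hb]
      simp only at hab
      rw [hab]
  have hs : ∑ v : ZMod n, 2 ≤ ∑ v : ZMod n, (2 * (if v ∈ T then 1 else 0) +
      (if v + 1 ∈ T then 1 else 0) + (if v - 1 ∈ T then 1 else 0) +
      (if v ∈ X1 then 1 else 0) + 2 * (if v ∈ X0 then 1 else 0)) := by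
    apply Finset.sum_le_sum
    intro v _
    simp only [hX0, hX1, Finset.mem_filter, Finset.mem_univ, true_and]
    by_cases h1 : v ∈ T <;> by_cases h2 : v + 1 ∈ T <;> by_cases h3 : v - 1 ∈ T <;>
      simp [h1, h2, h3]
  have e0 : ∀ Y : Finset (ZMod n), ∑ v : ZMod n, (if v ∈ Y then 1 else 0) = Y.card := by
    intro Y; simp
  have e1 : ∑ v : ZMod n, (if v + 1 ∈ T then 1 else 0) = T.card := by
    rw [← e0 T]
    exact Equiv.sum_comp (Equiv.addRight (1 : ZMod n)) (fun v => if v ∈ T then 1 else 0)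
  have e2 : ∑ v : ZMod n, (if v - 1 ∈ T then 1 else 0) = T.card := by
    rw [← e0 T]
    exact Equiv.sum_comp (Equiv.subRight (1 : ZMod n)) (fun v => if v ∈ T then 1 else 0)
  simp only [Finset.sum_add_distrib, ← Finset.mul_sum] at hs
  rw [e0, e0, e0, e1, e2] at hs
  simp [ZMod.card] at hs
  omega

def PP (n m : ℕ) : Prop :=
  m = 0 ∨ m % 5 = 4 ∨ (m % 5 = 1 ∧ 6 ≤ m) ∨ (m + 1 = n ∧ n % 5 = 4)

def adjN (n s a : ℕ) : Prop := s = a + 1 ∨ a = s + 1 ∨ (s = 0 ∧ a + 1 = n) ∨ (a = 0 ∧ s + 1 = n)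

theorem comb {n : ℕ} (hn : 5 ≤ n) (a b : ℕ) (ha : a < n) (hb : b < n) (hab : a < b)
    (hs : ∀ s, s < n → PP n s → s ≠ a ∧ s ≠ b ∧ (adjN n s a ↔ adjN n s b)) : False := by
  have h6' : ¬ PP n a := fun h => (hs a ha h).1 rfl
  have h7' : ¬ PP n b := fun h => (hs b hb h).2.1 rfl
  have h1 : PP n (a - 1) → (adjN n (a - 1) a ↔ adjN n (a - 1) b) :=
    fun h => (hs _ (by omega) h).2.2
  have h2 : PP n (a + 1) → (adjN n (a + 1) a ↔ adjN n (a + 1) b) :=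
    fun h => (hs _ (by omega) h).2.2
  have h3 : PP n (b - 1) → (adjN n (b - 1) a ↔ adjN n (b - 1) b) :=
    fun h => (hs _ (by omega) h).2.2
  have h4 : b + 1 < n → PP n (b + 1) → (adjN n (b + 1) a ↔ adjN n (b + 1) b) :=
    fun h' h => (hs _ h' h).2.2
  have h5 : (adjN n 0 a ↔ adjN n 0 b) := (hs 0 (by omega) (Or.inl rfl)).2.2
  clear hs
  unfold PP at *
  unfold adjN at *
  have hc : (a = 1 ∨ a = 2 ∨ a = 3) ∨ (5 ≤ a ∧ (a % 5 = 0 ∨ a % 5 = 2)) ∨ (5 ≤ a ∧ a % 5 = 3) := by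
    clear h1 h2 h3 h4 h5 h7'
    omega
  rcases hc with (h | h | h) | h | h
  · have hbn : b + 1 = n := by clear h1 h2 h3 h4; omega
    have h3' := h3 (by clear h1 h2 h3 h4 h5; omega)
    clear h1 h2 h3 h4
    omega
  · have hc : b = 3 ∨ (5 ≤ b ∧ (b % 5 = 0 ∨ b % 5 = 2)) ∨ (5 ≤ b ∧ b % 5 = 3) := by
      clear h1 h2 h3 h4 h5 h6'
      omega
    rcases hc with hb' | hb' | hb'
    · have := h4 (by omega) (by omega)
      clear h1 h2 h3 h4
      omega
    · have := h3 (by omega)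
      clear h1 h2 h3 h4
      omega
    · clear h1 h2 h3
      by_cases hq : b + 1 < n
      · have := h4 hq (by omega)
        clear h4
        omega
      · clear h4
        omega
  · have h2' := h2 (by omega)
    have hb5 : b = 5 := by clear h1 h2 h3 h4 h5; omega
    clear h1 h2 h3
    by_cases hq : b + 1 < n
    · have := h4 hq (by omega)
      clear h4
      omega
    · clear h4
      omega
  · have := h1 (by omega)
    clear h1 h2 h3 h4 h5
    omega
  · have h2' := h2 (by omega)
    have hb5 : b = a + 2 := by clear h1 h2 h3 h4 h5; omega
    clear h1 h2 h3
    by_cases hq : b + 1 < n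
    · have := h4 hq (by omega)
      clear h4
      omega
    · clear h4
      omega

theorem stmt14 (n : ℕ) (hodd : Odd n) (hn : 5 <= n) (f₀ : ZMod n -> ZMod n)
    (c : ZMod n) (hf : ∀ u, f₀ u = c) :
    metricDim (functigraph (cycGraph n) f₀) = ⌈(2 * (n : ℚ) + 3) / 5⌉₊ := by
  classical
  have : NeZero n := ⟨by omega⟩
  have hceil : ⌈(2 * (n : ℚ) + 3) / 5⌉₊ = (2 * n + 2) / 5 + 1 := by
    rw [Nat.ceil_eq_iff (by omega)]
    have h1 : 5 * ((2 * n + 2) / 5) ≤ 2 * n + 2 := by omega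
    have h2 : 2 * n + 3 ≤ 5 * ((2 * n + 2) / 5) + 5 := by omega
    have h1' : (5 : ℚ) * (((2 * n + 2) / 5 : ℕ) : ℚ) ≤ 2 * n + 2 := by exact_mod_cast h1
    have h2' : (2 * n + 3 : ℚ) ≤ 5 * (((2 * n + 2) / 5 : ℕ) : ℚ) + 5 := by exact_mod_cast h2
    constructor
    · rw [Nat.add_sub_cancel, lt_div_iff₀ (by norm_num)]; linarith
    · rw [div_le_iff₀ (by norm_num)]; push_cast at *; linarith
  rw [hceil]
  have low : ∀ S : Set (ZMod n ⊕ ZMod n), IsResolving (functigraph (cycGraph n) f₀) S →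
      (2 * n + 2) / 5 + 1 ≤ S.ncard := by
    intro S hS
    have hS' : ∀ x y, x ≠ y → ∃ w ∈ S, DD c x w ≠ DD c y w := by
      intro x y h
      obtain ⟨w, hw, h⟩ := hS x y h
      rw [dist_eq hn f₀ c hf, dist_eq hn f₀ c hf] at h
      exact ⟨w, hw, h⟩
    set T : Finset (ZMod n) := Finset.univ.filter (fun a => Sum.inl a ∈ S) with hTd
    have hT := lower_count hn T (by
      intro a b hab
      obtain ⟨w, hw, h⟩ := hS' (Sum.inl a) (Sum.inl b) (by simpa using hab)
      rcases w with w | w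
      · exact ⟨w, by simpa [hTd] using hw, h⟩
      · exact absurd rfl h)
    obtain ⟨z, hz⟩ : ∃ z, Sum.inr z ∈ S := by
      have hne : c + 1 ≠ c - 1 := by
        intro h
        have h1 := val_succ' hn (0 : ZMod n)
        have h2 := val_pred' hn (0 : ZMod n)
        have : (0 : ZMod n) + 1 = 0 - 1 := by
          have := congrArg (fun t => t - c) h
          simpa using this
        rw [this] at h1
        simp only [ZMod.val_zero] at h1 h2
        split_ifs at h1 h2 <;> omega
      obtain ⟨w, hw, h⟩ := hS' (Sum.inr (c + 1)) (Sum.inr (c - 1)) (by simpa using hne)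
      rcases w with w | w
      · exfalso
        apply h
        simp only [DD]
        rw [show c + 1 - c = 1 by ring, show c - 1 - c = -1 by ring, rho_one hn, rho_neg_one hn]
      · exact ⟨w, hw⟩
    have hsub : ((insert (Sum.inr z) (T.image Sum.inl) : Finset (ZMod n ⊕ ZMod n)) :
        Set (ZMod n ⊕ ZMod n)) ⊆ S := by
      intro x hx
      simp [hTd] at hx
      rcases hx with rfl | ⟨a, ha, rfl⟩
      · exact hz
      · exact ha
    have := Set.ncard_le_ncard hsub (Set.toFinite S)
    rw [Set.ncard_coe_finset, Finset.card_insert_of_notMem (by simp),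
      Finset.card_image_of_injective _ Sum.inl_injective] at this
    omega
  obtain ⟨m, hm⟩ := hodd
  have up : ∃ S : Set (ZMod n ⊕ ZMod n), IsResolving (functigraph (cycGraph n) f₀) S ∧
      S.ncard ≤ (2 * n + 2) / 5 + 1 := by
    set T : Finset (ZMod n) := Finset.univ.filter (fun a => PP n a.val) with hTd
    refine ⟨((insert (Sum.inr (c + (m : ZMod n))) (T.image Sum.inl) :
      Finset (ZMod n ⊕ ZMod n)) : Set (ZMod n ⊕ ZMod n)), ?_, ?_⟩
    · have hd1 : ∀ a b : ZMod n, a.val < b.val → ∃ s ∈ T, D1 a s ≠ D1 b s := by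
        intro a b hab
        by_contra hcon
        push Not at hcon
        apply comb hn a.val b.val (ZMod.val_lt a) (ZMod.val_lt b) hab
        intro s hs hP
        have hv : ((s : ZMod n)).val = s := ZMod.val_cast_of_lt hs
        have h := hcon (s : ZMod n) (by simp [hTd, hv, hP])
        have key : ∀ v : ZMod n, D1 v (s : ZMod n) =
            if s = v.val then 0 else if adjN n s v.val then 1 else 2 := by
          intro v
          have e1 : v = (s : ZMod n) ↔ s = v.val := by
            rw [← (ZMod.val_injective n).eq_iff, hv, eq_comm]
          have e2 : ((s : ZMod n) = v + 1 ∨ (s : ZMod n) = v - 1) ↔ adjN n s v.val := by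
            rw [← (ZMod.val_injective n).eq_iff, ← (ZMod.val_injective n).eq_iff, hv,
              val_succ' hn, val_pred' hn]
            have := ZMod.val_lt v
            unfold adjN
            split_ifs <;> omega
          unfold D1
          simp only [e1, e2]
        rw [key, key] at h
        split_ifs at h <;> first | omega | (refine ⟨?_, ?_, ?_⟩ <;> first | assumption | exact iff_of_true ‹_› ‹_› | exact iff_of_false ‹_› ‹_›)
      have hw : ∀ b : ZMod n, rho (b - (c + (m : ZMod n))) ≤ m := by
        intro b
        have := ZMod.val_lt (b - (c + (m : ZMod n)))
        unfold rho
        omega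
      have hmv : (-(m : ZMod n)) = ((m + 1 : ℕ) : ZMod n) := by
        have : ((2 * m + 1 : ℕ) : ZMod n) = 0 := by rw [← hm]; simp
        push_cast at *
        linear_combination -this
      have hcw : rho (c - (c + (m : ZMod n))) = m := by
        rw [show c - (c + (m : ZMod n)) = -(m : ZMod n) by ring, hmv]
        unfold rho
        rw [ZMod.val_cast_of_lt (by omega)]
        omega
      have hyw : ∀ b : ZMod n, (b - (c + (m : ZMod n))).val =
          if m ≤ (b - c).val then (b - c).val - m else (b - c).val + m + 1 := by
        intro b
        rw [show b - (c + (m : ZMod n)) = (b - c) + -(m : ZMod n) by ring, hmv, ZMod.val_add,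
          ZMod.val_cast_of_lt (by omega)]
        have := ZMod.val_lt (b - c)
        split_ifs with h
        · rw [Nat.mod_eq_sub_mod (by omega), Nat.mod_eq_of_lt (by omega)]; omega
        · rw [Nat.mod_eq_of_lt (by omega)]; omega
      intro x y hxy
      simp only [dist_eq hn f₀ c hf]
      rcases x with x | x <;> rcases y with y | y
      · have hne : x.val ≠ y.val := fun h => hxy (by rw [ZMod.val_injective n h])
        rcases lt_or_gt_of_ne hne with h | h
        · obtain ⟨s, hs, h⟩ := hd1 x y h
          exact ⟨Sum.inl s, by simp [hs], h⟩
        · obtain ⟨s, hs, h⟩ := hd1 y x h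
          exact ⟨Sum.inl s, by simp [hs], h.symm⟩
      · refine ⟨Sum.inr (c + (m : ZMod n)), by simp, ?_⟩
        have := hw y
        simp only [DD]
        omega
      · refine ⟨Sum.inr (c + (m : ZMod n)), by simp, ?_⟩
        have := hw x
        simp only [DD]
        omega
      · by_cases h : rho (x - c) = rho (y - c)
        · refine ⟨Sum.inr (c + (m : ZMod n)), by simp, ?_⟩
          simp only [DD]
          intro h'
          apply hxy
          have : (x - c).val = (y - c).val := by
            unfold rho at h h'
            rw [hyw, hyw] at h'
            have := ZMod.val_lt (x - c)
            have := ZMod.val_lt (y - c)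
            split_ifs at h' <;> omega
          have := ZMod.val_injective n this
          rw [sub_left_inj] at this
          rw [this]
        · refine ⟨Sum.inl 0, by simp [hTd, PP], ?_⟩
          simp only [DD]
          omega
    · rw [Set.ncard_coe_finset, Finset.card_insert_of_notMem (by simp),
        Finset.card_image_of_injective _ Sum.inl_injective]
      have : T.card ≤ (Finset.range ((2 * n + 2) / 5)).card := by
        apply Finset.card_le_card_of_injOn (fun v => 2 * v.val / 5)
        · intro v hv
          have hv := (Finset.mem_filter.1 hv).2
          unfold PP at hv
          have := ZMod.val_lt v
          simp only [Finset.coe_range, Set.mem_Iio]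
          omega
        · intro a ha b hb hab
          have ha := (Finset.mem_filter.1 ha).2
          have hb := (Finset.mem_filter.1 hb).2
          unfold PP at ha hb
          simp only at hab
          have := ZMod.val_lt a
          have := ZMod.val_lt b
          apply ZMod.val_injective n
          omega
      rw [Finset.card_range] at this
      omega
  obtain ⟨S, hS, hc⟩ := up
  have hmem : S.ncard ∈ {k | ∃ S : Set (ZMod n ⊕ ZMod n),
      IsResolving (functigraph (cycGraph n) f₀) S ∧ S.Finite ∧ S.ncard = k} :=
    ⟨S, hS, Set.toFinite S, rfl⟩
  unfold metricDim
  apply le_antisymm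
  · exact (Nat.sInf_le hmem).trans hc
  · apply le_csInf ⟨_, hmem⟩
    rintro k ⟨S', h, _, rfl⟩
    exact low S' h
end
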